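/- Let S be a standard Borel space and let (h_a)_{a ∈ A} be a family of Feller-continuous sub-probability kernels S ⇝ S indexed by a Polish action space A, such that for each fixed s the map a ↦ h_a(s) is also weakly continuous. Let E be an equivalence relation on S which is a state bisimulation, i.e., s E t implies h_a(s) ΓE h_a(t) for all a ∈ A, and suppose its graph is closed. If A' ⊆ A is dense and E' is a closed equivalence relation such that s E' t implies h_a(s) ΘE' h_a(t) for all a ∈ A', then s E' t implies h_a(s) ΘE' h_a(t) for all a ∈ A (the bisimulation condition extends from a dense set of actions to all actions). -/

import Mathlib

open MeasureTheory Filter Topology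

/-- A set `A` is `r`-closed when it is closed under the relation `r`. -/
def RClosed {X : Type*} (r : X → X → Prop) (A : Set X) : Prop :=
  ∀ ⦃x⦄, x ∈ A → ∀ ⦃y⦄, r x y → y ∈ A

/-- The probabilistic relation lifting `Γ`. -/
def GammaRel {X : Type*} [MeasurableSpace X] (r : X → X → Prop) (μ ν : Measure X) : Prop :=
  ∀ A : Set X, MeasurableSet A → RClosed r A → μ A = ν A

/-- The coupling-based relation lifting `Θ`: there is a coupling of `μ` and `ν`
concentrated on a measurable subset of the relation. -/
def ThetaRel {X : Type*} [MeasurableSpace X] (r : X → X → Prop) (μ ν : Measure X) : Prop :=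
  ∃ ω : Measure (X × X), ω.fst = μ ∧ ω.snd = ν ∧
    ∃ S : Set (X × X), MeasurableSet S ∧ (∀ p ∈ S, r p.1 p.2) ∧ ω S = ω Set.univ

/-- A kernel is Feller continuous when the associated map into measures is continuous
with respect to the topology of weak convergence. -/
def FellerCont {X Z : Type*} [TopologicalSpace X] [TopologicalSpace Z] [MeasurableSpace Z]
    (k : X → Measure Z) : Prop :=
  ∀ g : BoundedContinuousFunction Z ℝ, Continuous fun x => ∫ z, g z ∂(k x)

/-!
By Prokhorov's theorem, the map sending a probability measure on `X × Y` to its pair of marginals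
is proper, hence closed. For a closed relation `r`, the couplings giving full mass to `r` form a
closed set by the portmanteau theorem, so their image, the set of `ThetaRel r`-related pairs of
probability measures, is closed too. Finite measures are reduced to this case by normalization;
the pair `(0, 0)`, where normalization is not continuous, is trivially related. Along a weakly
continuous family the related parameters therefore form a closed set, which is everything once it
contains a dense set.
-/

theorem upperSemicontinuous_probabilityMeasure_apply_of_isClosed {X : Type*} [TopologicalSpace X]
    [HasOuterApproxClosed X] [MeasurableSpace X] [OpensMeasurableSpace X]
    {F : Set X} (hF : IsClosed F) :
    UpperSemicontinuous fun μ : ProbabilityMeasure X => (μ : Measure X) F :=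
  upperSemicontinuous_iff_limsup_le.2 fun _ =>
    ProbabilityMeasure.limsup_measure_closed_le_of_tendsto tendsto_id hF

theorem isTightMeasureSet_image_toMeasure_of_isCompact {X : Type*} [TopologicalSpace X]
    [TopologicalSpace.IsCompletelyPseudoMetrizableSpace X] [SecondCountableTopology X]
    [MeasurableSpace X] [OpensMeasurableSpace X]
    {K : Set (ProbabilityMeasure X)} (hK : IsCompact K) :
    IsTightMeasureSet (ProbabilityMeasure.toMeasure '' K) :=
  letI := TopologicalSpace.upgradeIsCompletelyPseudoMetrizable X
  isTightMeasureSet_of_isCompact_closure hK.closure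

/-- The pair of marginals of a probability measure on a product space, as a map between spaces
of probability measures with the topology of weak convergence. The couplings of `μ` and `ν` form
its fiber over `(μ, ν)`. -/
noncomputable def marginals {X Y : Type*} [MeasurableSpace X] [MeasurableSpace Y]
    (π : ProbabilityMeasure (X × Y)) : ProbabilityMeasure X × ProbabilityMeasure Y :=
  (π.map measurable_fst.aemeasurable, π.map measurable_snd.aemeasurable)

theorem isTightMeasureSet_marginals_preimage {X Y : Type*}
    [TopologicalSpace X] [TopologicalSpace.IsCompletelyPseudoMetrizableSpace X]
    [SecondCountableTopology X] [MeasurableSpace X] [OpensMeasurableSpace X]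
    [TopologicalSpace Y] [TopologicalSpace.IsCompletelyPseudoMetrizableSpace Y]
    [SecondCountableTopology Y] [MeasurableSpace Y] [OpensMeasurableSpace Y]
    {K : Set (ProbabilityMeasure X × ProbabilityMeasure Y)} (hK : IsCompact K) :
    IsTightMeasureSet (ProbabilityMeasure.toMeasure '' (marginals ⁻¹' K)) := by
  apply IsTightMeasureSet.prodMk
  · refine (isTightMeasureSet_image_toMeasure_of_isCompact (hK.image continuous_fst)).subset ?_
    rintro _ ⟨_, ⟨π, hπ, rfl⟩, rfl⟩
    exact ⟨(marginals π).1, ⟨_, hπ, rfl⟩, rfl⟩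
  · refine (isTightMeasureSet_image_toMeasure_of_isCompact (hK.image continuous_snd)).subset ?_
    rintro _ ⟨_, ⟨π, hπ, rfl⟩, rfl⟩
    exact ⟨(marginals π).2, ⟨_, hπ, rfl⟩, rfl⟩

section Marginals

variable {X Y : Type*} [TopologicalSpace X] [MeasurableSpace X] [BorelSpace X]
  [TopologicalSpace Y] [MeasurableSpace Y] [BorelSpace Y]

theorem continuous_marginals [SecondCountableTopologyEither X Y] :
    Continuous (marginals (X := X) (Y := Y)) :=
  (ProbabilityMeasure.continuous_map continuous_fst).prodMk
    (ProbabilityMeasure.continuous_map continuous_snd)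

theorem isProperMap_marginals [PolishSpace X] [PolishSpace Y] :
    IsProperMap (marginals (X := X) (Y := Y)) := by
  refine isProperMap_iff_isCompact_preimage.2 ⟨continuous_marginals, fun K hK => ?_⟩
  have hclosed : IsClosed (marginals ⁻¹' K) := hK.isClosed.preimage continuous_marginals
  rw [← hclosed.closure_eq]
  exact isCompact_closure_of_isTightMeasureSet (isTightMeasureSet_marginals_preimage hK)

end Marginals

namespace ThetaRel

variable {X : Type*} [MeasurableSpace X] {r : X → X → Prop} {μ ν : Measure X}

theorem measure_univ_eq (h : ThetaRel r μ ν) : μ Set.univ = ν Set.univ := by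
  obtain ⟨ω, rfl, rfl, -⟩ := h
  rw [Measure.fst_univ, Measure.snd_univ]

theorem zero : ThetaRel r (0 : Measure X) 0 :=
  ⟨0, Measure.fst_zero, Measure.snd_zero, ∅, MeasurableSet.empty, fun _ => False.elim, rfl⟩

theorem smul (c : NNReal) (h : ThetaRel r μ ν) : ThetaRel r (c • μ) (c • ν) := by
  obtain ⟨ω, rfl, rfl, T, hT, hTr, hωT⟩ := h
  refine ⟨c • ω, Measure.map_smul c ω Prod.fst, Measure.map_smul c ω Prod.snd, T, hT, hTr, ?_⟩
  rw [Measure.smul_apply, Measure.smul_apply, hωT]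

end ThetaRel

theorem thetaRel_normalize_iff {X : Type*} [MeasurableSpace X] [Nonempty X] {r : X → X → Prop}
    {μ ν : FiniteMeasure X} (hμ : μ ≠ 0) (hmass : μ.mass = ν.mass) :
    ThetaRel r (μ.normalize : Measure X) ν.normalize ↔ ThetaRel r (μ : Measure X) ν := by
  have hν : ν ≠ 0 := ν.mass_nonzero_iff.1 (hmass ▸ μ.mass_nonzero_iff.2 hμ)
  have hμ_smul := congrArg FiniteMeasure.toMeasure μ.self_eq_mass_smul_normalize
  have hν_smul := congrArg FiniteMeasure.toMeasure ν.self_eq_mass_smul_normalize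
  constructor <;> intro h
  · rw [hμ_smul, hν_smul, ← hmass]
    exact h.smul μ.mass
  · rw [μ.toMeasure_normalize_eq_of_nonzero hμ, ν.toMeasure_normalize_eq_of_nonzero hν, ← hmass]
    exact h.smul μ.mass⁻¹

theorem thetaRel_iff_exists_marginals_eq {X : Type*} [MeasurableSpace X] {r : X → X → Prop}
    (hr : MeasurableSet {p : X × X | r p.1 p.2}) {μ ν : ProbabilityMeasure X} :
    ThetaRel r (μ : Measure X) ν ↔ ∃ π : ProbabilityMeasure (X × X),
      1 ≤ (π : Measure (X × X)) {p | r p.1 p.2} ∧ marginals π = (μ, ν) := by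
  constructor
  · rintro ⟨ω, hfst, hsnd, T, -, hTr, hωT⟩
    have hω : ω Set.univ = 1 := by rw [← Measure.fst_univ, hfst, measure_univ]
    refine ⟨⟨ω, ⟨hω⟩⟩, ?_, Prod.ext (Subtype.ext hfst) (Subtype.ext hsnd)⟩
    exact (hωT.trans hω).ge.trans (measure_mono hTr)
  · rintro ⟨π, hπ, hπμν⟩
    obtain ⟨rfl, rfl⟩ := Prod.mk.inj hπμν
    refine ⟨π, rfl, rfl, _, hr, fun _ hp => hp, ?_⟩
    rw [measure_univ]
    exact prob_le_one.antisymm hπ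

section Closed

variable {X : Type*} [TopologicalSpace X] [PolishSpace X] [MeasurableSpace X] [BorelSpace X]
  {r : X → X → Prop}

theorem isClosed_setOf_thetaRel_probabilityMeasure (hr : IsClosed {p : X × X | r p.1 p.2}) :
    IsClosed {p : ProbabilityMeasure X × ProbabilityMeasure X |
      ThetaRel r (p.1 : Measure X) p.2} := by
  have hcouplings : IsClosed {π : ProbabilityMeasure (X × X) |
      1 ≤ (π : Measure (X × X)) {p | r p.1 p.2}} :=
    (upperSemicontinuous_probabilityMeasure_apply_of_isClosed hr).isClosed_preimage 1
  convert! isProperMap_marginals.isClosedMap _ hcouplings using 1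
  ext p
  exact thetaRel_iff_exists_marginals_eq hr.measurableSet

theorem isClosed_setOf_thetaRel_finiteMeasure (hr : IsClosed {p : X × X | r p.1 p.2}) :
    IsClosed {p : FiniteMeasure X × FiniteMeasure X | ThetaRel r (p.1 : Measure X) p.2} := by
  refine isClosed_iff_ultrafilter.2 fun ⟨μ, ν⟩ u hu hur => ?_
  have hfst : Tendsto Prod.fst u (𝓝 μ) := (continuous_fst.tendsto (μ, ν)).mono_left hu
  have hsnd : Tendsto Prod.snd u (𝓝 ν) := (continuous_snd.tendsto (μ, ν)).mono_left hu
  have hmass_of_rel {p : FiniteMeasure X × FiniteMeasure X}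
      (hp : ThetaRel r (p.1 : Measure X) p.2) : p.1.mass = p.2.mass :=
    congrArg ENNReal.toNNReal hp.measure_univ_eq
  have hmass : μ.mass = ν.mass :=
    tendsto_nhds_unique_of_eventuallyEq hfst.mass hsnd.mass
      (Filter.mem_of_superset hur fun _ => hmass_of_rel)
  rcases eq_or_ne μ 0 with rfl | hμ
  · obtain rfl : ν = 0 := ν.mass_zero_iff.1 hmass.symm
    exact ThetaRel.zero
  have hν : ν ≠ 0 := ν.mass_nonzero_iff.1 (hmass ▸ μ.mass_nonzero_iff.2 hμ)
  have : Nonempty X := by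
    by_contra! hX
    exact hμ (Subtype.ext (Measure.eq_zero_of_isEmpty _))
  have hne : ∀ᶠ p in (u : Filter (FiniteMeasure X × FiniteMeasure X)), p.1.mass ≠ 0 :=
    hfst.mass.eventually_ne (μ.mass_nonzero_iff.2 hμ)
  have hnormalize : ThetaRel r (μ.normalize : Measure X) ν.normalize := by
    refine (isClosed_setOf_thetaRel_probabilityMeasure hr).mem_of_tendsto
      ((FiniteMeasure.tendsto_normalize_of_tendsto hfst hμ).prodMk_nhds
        (FiniteMeasure.tendsto_normalize_of_tendsto hsnd hν)) ?_
    filter_upwards [hur, hne] with p hp hp0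
    exact (thetaRel_normalize_iff (p.1.mass_nonzero_iff.1 hp0) (hmass_of_rel hp)).2 hp
  exact (thetaRel_normalize_iff hμ hmass).1 hnormalize

end Closed

theorem FellerCont.continuous_finiteMeasure {X Z : Type*} [TopologicalSpace X]
    [TopologicalSpace Z] [MeasurableSpace Z] [OpensMeasurableSpace Z] {k : X → Measure Z}
    (hk : FellerCont k) (hfin : ∀ x, IsFiniteMeasure (k x)) :
    Continuous (Y := FiniteMeasure Z) fun x => ⟨k x, hfin x⟩ :=
  FiniteMeasure.continuous_iff_forall_continuous_integral.2 hk

theorem FellerCont.isClosed_setOf_thetaRel {A X : Type*} [TopologicalSpace A]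
    [TopologicalSpace X] [PolishSpace X] [MeasurableSpace X] [BorelSpace X] {r : X → X → Prop}
    (hr : IsClosed {p : X × X | r p.1 p.2}) {μ ν : A → Measure X}
    (hμ : FellerCont μ) (hν : FellerCont ν)
    (hμfin : ∀ a, IsFiniteMeasure (μ a)) (hνfin : ∀ a, IsFiniteMeasure (ν a)) :
    IsClosed {a | ThetaRel r (μ a) (ν a)} :=
  (isClosed_setOf_thetaRel_finiteMeasure hr).preimage
    ((hμ.continuous_finiteMeasure hμfin).prodMk (hν.continuous_finiteMeasure hνfin))

theorem bisim_extends_from_dense_actions_general {S A : Type*}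
    [TopologicalSpace S] [PolishSpace S] [MeasurableSpace S] [BorelSpace S]
    [TopologicalSpace A] (h : A → S → Measure S)
    (hfin : ∀ a s, IsFiniteMeasure (h a s))
    (hFellerA : ∀ s, FellerCont fun a => h a s)
    (A' : Set A) (hdense : Dense A')
    (E' : S → S → Prop) (hE'closed : IsClosed {p : S × S | E' p.1 p.2})
    (hbisim' : ∀ s t, E' s t → ∀ a ∈ A', ThetaRel E' (h a s) (h a t)) :
    ∀ s t, E' s t → ∀ a, ThetaRel E' (h a s) (h a t) := by
  intro s t hst a
  have hclosed : IsClosed {a | ThetaRel E' (h a s) (h a t)} :=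
    (hFellerA s).isClosed_setOf_thetaRel hE'closed (hFellerA t)
      (fun a => hfin a s) (fun a => hfin a t)
  exact closure_minimal (hbisim' s t hst) hclosed (hdense a)

/-- For a Feller-continuous LMP, the bisimulation condition extends from a dense set of
actions to all actions: if `E'` is a closed equivalence relation and `s E' t` implies
`h_a(s) ΘE' h_a(t)` for all `a` in a dense subset `A'`, then this holds for all `a`. -/
theorem bisim_extends_from_dense_actions {S A : Type*}
    [TopologicalSpace S] [PolishSpace S] [MeasurableSpace S] [BorelSpace S]
    [TopologicalSpace A] [PolishSpace A]
    (h : A → S → Measure S)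
    (hsub : ∀ a s, h a s Set.univ ≤ 1)
    (hfin : ∀ a s, IsFiniteMeasure (h a s))
    (hFellerS : ∀ a, FellerCont (h a))
    (hFellerA : ∀ s, FellerCont fun a => h a s)
    (E : S → S → Prop) (hE : Equivalence E)
    (hEclosed : IsClosed {p : S × S | E p.1 p.2})
    (hEbisim : ∀ s t, E s t → ∀ a, GammaRel E (h a s) (h a t))
    (A' : Set A) (hdense : Dense A')
    (E' : S → S → Prop) (hE' : Equivalence E')
    (hE'closed : IsClosed {p : S × S | E' p.1 p.2})
    (hbisim' : ∀ s t, E' s t → ∀ a ∈ A', ThetaRel E' (h a s) (h a t)) :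
    ∀ s t, E' s t → ∀ a, ThetaRel E' (h a s) (h a t) := by
  exact bisim_extends_from_dense_actions_general h hfin hFellerA A' hdense E' hE'closed hbisim'
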